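/- (Lemma 2, outer contour) With the zero-drift mostly symmetric setup, running assumptions ε = n^{-α}, δ = n^{-β} (1/2 < α < 2β, α + β > 1, 1/3 < β < 1/2), and C^out = { t : |t| = (1+γ)/S(1) }: if γ > 0 is sufficiently small, then (2πi)^{-(d+1)} ∫_{N × C^out} [G(z,t)/H(z,t)] · dz dt / (z_1···z_d t)^{n+1} = O(τ^n) for some 0 < τ < S(1). -/

import Mathlib

open Finset Filter MeasureTheory
open scoped Classical Real

noncomputable section

/-- Total weight of walks of length `n` with steps in `S` (weighted by `w`),
starting at the origin and never leaving `ℕ^d`. -/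
def walkWeight (d : ℕ) (S : Finset (Fin d → ℤ)) (w : (Fin d → ℤ) → ℝ) (n : ℕ) : ℝ :=
  ∑ f : Fin n → {i // i ∈ S},
    if ∀ m : ℕ, m ≤ n → ∀ j : Fin d,
        0 ≤ ∑ k ∈ Finset.univ.filter (fun k : Fin n => (k : ℕ) < m), ((f k : Fin d → ℤ) j)
    then ∏ k : Fin n, w (f k) else 0

/-- The step set `S` (with weights `w`) is symmetric over the `k`-th coordinate axis. -/
def SymmetricAxis (d : ℕ) (S : Finset (Fin d → ℤ)) (w : (Fin d → ℤ) → ℝ) (k : Fin d) : Prop :=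
  ∀ i ∈ S, Function.update i k (-(i k)) ∈ S ∧ w (Function.update i k (-(i k))) = w i

namespace ZeroDrift

variable (d : ℕ) (S : Finset (Fin (d + 1) → ℤ)) (w : (Fin (d + 1) → ℤ) → ℝ)

/-- `S(1)`, the total weight of the step set. -/
def S1 : ℝ := ∑ i ∈ S, w i

/-- `A(ẑ)`: the Laurent polynomial collecting steps with last coordinate `-1`. -/
def AC (z : Fin (d + 1) → ℂ) : ℂ :=
  ∑ i ∈ S.filter fun i => i (Fin.last d) = -1,
    (w i : ℂ) * ∏ j : Fin d, z (Fin.castSucc j) ^ (i (Fin.castSucc j))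

/-- `B(ẑ)`: the Laurent polynomial collecting steps with last coordinate `1`. -/
def BC (z : Fin (d + 1) → ℂ) : ℂ :=
  ∑ i ∈ S.filter fun i => i (Fin.last d) = 1,
    (w i : ℂ) * ∏ j : Fin d, z (Fin.castSucc j) ^ (i (Fin.castSucc j))

/-- `Q(ẑ)`: the Laurent polynomial collecting steps with last coordinate `0`. -/
def QC (z : Fin (d + 1) → ℂ) : ℂ :=
  ∑ i ∈ S.filter fun i => i (Fin.last d) = 0,
    (w i : ℂ) * ∏ j : Fin d, z (Fin.castSucc j) ^ (i (Fin.castSucc j))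

/-- The characteristic Laurent polynomial `S(z)` evaluated at `z : ℂ^{d+1}`. -/
def SC (z : Fin (d + 1) → ℂ) : ℂ :=
  ∑ i ∈ S, (w i : ℂ) * ∏ j : Fin (d + 1), z j ^ (i j)

/-- `S̄(z) = S(z_1,…,z_{d},1/z_{d+1})` evaluated at `z : ℂ^{d+1}`. -/
def SbarC (z : Fin (d + 1) → ℂ) : ℂ :=
  ∑ i ∈ S, (w i : ℂ) *
    (∏ j : Fin d, z (Fin.castSucc j) ^ (i (Fin.castSucc j))) *
    z (Fin.last d) ^ (-(i (Fin.last d)))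

/-- The numerator `G(z,t)` of the diagonal representation. -/
def GC (z : Fin (d + 1) → ℂ) (t : ℂ) : ℂ :=
  (∏ j : Fin d, (1 + z (Fin.castSucc j))) *
    (1 - t * (∏ j, z j) * (QC d S w z + 2 * z (Fin.last d) * AC d S w z))

/-- The denominator `H(z,t) = H_1 H_2 H_3` of the diagonal representation. -/
def HC (z : Fin (d + 1) → ℂ) (t : ℂ) : ℂ :=
  (1 - z (Fin.last d)) * (1 - t * (∏ j, z j) * SbarC d S w z) *
    (1 - t * (∏ j, z j) * (QC d S w z + z (Fin.last d) * AC d S w z))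

/-- The point of `ℂ^{d+1}` with coordinates `i^{m_j}` encoded by `m : Fin (d+1) → Fin 4`. -/
def wOf (m : Fin (d + 1) → Fin 4) : Fin (d + 1) → ℂ :=
  fun j => Complex.I ^ (m j : ℕ)

/-- The (indices of the) finite set `Γ` of possible contributing points: `w_j ∈ {±1}` for
`j ≤ d`, `w_{d+1} ∈ {±1,±i}`, and `|1/(w_1⋯w_{d+1} S(w))| = 1/S(1)`. -/
def GammaIdx : Finset (Fin (d + 1) → Fin 4) :=
  Finset.univ.filter fun m =>
    (∀ j : Fin d, m (Fin.castSucc j) = 0 ∨ m (Fin.castSucc j) = 2) ∧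
    ‖1 / ((∏ j, wOf d m j) * SC d S w (wOf d m))‖ = 1 / S1 d S w

/-- The argument (angle) of the point encoded by `m` in coordinate `j`. -/
def argOf (m : Fin (d + 1) → Fin 4) (j : Fin (d + 1)) : ℝ := (m j : ℕ) * π / 2

/-- The box of angles parametrizing the product of arcs `N_w` for `w = wOf m`. -/
def box (m : Fin (d + 1) → Fin 4) (δ : ℝ) : Set (Fin (d + 1) → ℝ) :=
  Set.univ.pi fun j => Set.Ioo (argOf d m j - δ) (argOf d m j + δ)

/-- The parametrization of the torus `|z_j| = 1` (`j ≤ d`), `|z_{d+1}| = 1 - ε`. -/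
def zOf (ε : ℝ) (θ : Fin (d + 1) → ℝ) : Fin (d + 1) → ℂ :=
  fun j => (if j = Fin.last d then (1 - ε : ℂ) else 1) * Complex.exp (Complex.I * θ j)

/-- Angles parametrizing `N = ⋃_{w ∈ Γ} N_w`. -/
def Nparam (δ : ℝ) : Set (Fin (d + 1) → ℝ) := ⋃ m ∈ GammaIdx d S w, box d m δ

/-- The contour integral `(2πi)^{-(d+2)} ∫_{N × C} G/H · dz dt/(z_1⋯z_{d+1}t)^{n+1}`,
parametrized by angles, where `C` is the circle `|t| = r`. -/
def fullIntegral (n : ℕ) (ε δ r : ℝ) : ℂ :=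
  (((2 * π) ^ (d + 2) : ℝ))⁻¹ •
    ∫ θ in Nparam d S w δ,
      ∫ φ in Set.Ioo 0 (2 * π),
        GC d S w (zOf d ε θ) ((r : ℂ) * Complex.exp (Complex.I * φ)) /
            HC d S w (zOf d ε θ) ((r : ℂ) * Complex.exp (Complex.I * φ)) *
          (((∏ j, zOf d ε θ j) * ((r : ℂ) * Complex.exp (Complex.I * φ))) ^ n)⁻¹

/-- The residue integrand
`[(1+z_1)⋯(1+z_d)/(B(ẑ) z_1⋯z_{d+1})]·[(B(ẑ) - z_{d+1}^2 A(ẑ))/(1-z_{d+1})]·S̄(z)^n`,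
parametrized by angles, including the Jacobian factors `i z_j` of `dz_j`. -/
def resIntegrand (n : ℕ) (ε : ℝ) (θ : Fin (d + 1) → ℝ) : ℂ :=
  ((∏ j : Fin d, (1 + zOf d ε θ (Fin.castSucc j))) /
      (BC d S w (zOf d ε θ) * ∏ j, zOf d ε θ j)) *
    ((BC d S w (zOf d ε θ) - zOf d ε θ (Fin.last d) ^ 2 * AC d S w (zOf d ε θ)) /
      (1 - zOf d ε θ (Fin.last d))) *
    SbarC d S w (zOf d ε θ) ^ n *
    ∏ j, Complex.I * zOf d ε θ j

/-- The contour integral `∫_{N_w} (residue integrand) dz` over the product of arcs `N_w`,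
`w = wOf m`, parametrized by angles. -/
def resIntegral (n : ℕ) (ε δ : ℝ) (m : Fin (d + 1) → Fin 4) : ℂ :=
  ∫ θ in box d m δ, resIntegrand d S w n ε θ

end ZeroDrift


namespace ZeroDrift

variable {d : ℕ} {S : Finset (Fin (d + 1) → ℤ)} {w : (Fin (d + 1) → ℤ) → ℝ}

theorem norm_zOf_castSucc (ε : ℝ) (θ : Fin (d + 1) → ℝ) (j : Fin d) :
    ‖zOf d ε θ (Fin.castSucc j)‖ = 1 := by
  have h : Fin.castSucc j ≠ Fin.last d := (Fin.castSucc_lt_last j).ne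
  simp [zOf, h, mul_comm Complex.I, Complex.norm_exp_ofReal_mul_I]

theorem norm_zOf_last {ε : ℝ} (hε : ε ≤ 1) (θ : Fin (d + 1) → ℝ) :
    ‖zOf d ε θ (Fin.last d)‖ = 1 - ε := by
  have h : (1 - ε : ℂ) = ((1 - ε : ℝ) : ℂ) := by push_cast; rfl
  simp only [zOf, if_true, norm_mul, mul_comm Complex.I, Complex.norm_exp_ofReal_mul_I, mul_one]
  rw [h, Complex.norm_real, Real.norm_of_nonneg (by linarith)]

theorem norm_prod_zOf {ε : ℝ} (hε : ε ≤ 1) (θ : Fin (d + 1) → ℝ) :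
    ‖∏ j, zOf d ε θ j‖ = 1 - ε := by
  rw [norm_prod, Fin.prod_univ_castSucc, norm_zOf_last hε]
  simp [norm_zOf_castSucc]

theorem norm_sum_filter_zOf_le (hw : ∀ i ∈ S, 0 < w i) (ε : ℝ) (θ : Fin (d + 1) → ℝ)
    (p : (Fin (d + 1) → ℤ) → Prop) [DecidablePred p] :
    ‖∑ i ∈ S.filter p, (w i : ℂ) *
        ∏ j : Fin d, zOf d ε θ (Fin.castSucc j) ^ (i (Fin.castSucc j))‖ ≤
      ∑ i ∈ S.filter p, w i := by
  refine norm_sum_le_of_le _ fun i hi => ?_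
  rw [norm_mul, norm_prod, Complex.norm_real,
    Real.norm_of_nonneg (hw i (Finset.mem_filter.1 hi).1).le]
  simp [norm_zOf_castSucc]

theorem S1_eq_sum_filter
    (hstep : ∀ i ∈ S, (∀ j, i j = -1 ∨ i j = 0 ∨ i j = 1) ∧ i ≠ 0) :
    S1 d S w = (∑ i ∈ S.filter fun i => i (Fin.last d) = -1, w i) +
      (∑ i ∈ S.filter fun i => i (Fin.last d) = 0, w i) +
      ∑ i ∈ S.filter fun i => i (Fin.last d) = 1, w i := by
  simp only [S1, Finset.sum_filter, ← Finset.sum_add_distrib]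
  refine Finset.sum_congr rfl fun i hi => ?_
  rcases (hstep i hi).1 (Fin.last d) with h | h | h <;> simp [h]

theorem zOf_zero_argOf (m : Fin (d + 1) → Fin 4) : zOf d 0 (argOf d m) = wOf d m := by
  funext j
  have h : Complex.I * ((argOf d m j : ℝ) : ℂ) = ((m j : ℕ) : ℂ) * (π / 2 * Complex.I) := by
    simp only [argOf]
    push_cast
    ring
  simp only [zOf, wOf, h, Complex.exp_nat_mul, Complex.exp_pi_div_two_mul_I]
  simp

theorem norm_wOf (m : Fin (d + 1) → Fin 4) (j : Fin (d + 1)) : ‖wOf d m j‖ = 1 := by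
  simp [wOf]

theorem SbarC_wOf {m : Fin (d + 1) → Fin 4}
    (hm : ∀ j : Fin d, m (Fin.castSucc j) = 0 ∨ m (Fin.castSucc j) = 2) :
    SbarC d S w (wOf d m) = (starRingEnd ℂ) (SC d S w (wOf d m)) := by
  have hreal : ∀ j : Fin d, (starRingEnd ℂ) (wOf d m (Fin.castSucc j)) =
      wOf d m (Fin.castSucc j) := fun j => by
    rcases hm j with h | h <;> simp [wOf, h]
  have hlast : (starRingEnd ℂ) (wOf d m (Fin.last d)) = (wOf d m (Fin.last d))⁻¹ :=
    (Complex.inv_eq_conj (norm_wOf m _)).symm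
  simp only [SbarC, SC, map_sum, map_mul, map_prod, map_zpow₀, Complex.conj_ofReal,
    Fin.prod_univ_castSucc, hreal, hlast, inv_zpow', mul_assoc]

theorem norm_SbarC_wOf {m : Fin (d + 1) → Fin 4} (hm : m ∈ GammaIdx d S w) :
    ‖SbarC d S w (wOf d m)‖ = S1 d S w := by
  obtain ⟨hm₁, hm₂⟩ := (Finset.mem_filter.1 hm).2
  rw [SbarC_wOf hm₁, RCLike.norm_conj]
  simpa [norm_prod, norm_wOf] using hm₂

/-- Near a point of `Γ`, the modulus of `S̄` is close to its value `S(1)` on `Γ`. -/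
theorem eventually_lt_norm_SbarC {c : ℝ} (hc : c < S1 d S w) :
    ∃ ρ > 0, ∀ ε δ : ℝ, |ε| < ρ → δ < ρ → ∀ θ ∈ Nparam d S w δ,
      c < ‖SbarC d S w (zOf d ε θ)‖ := by
  have key : ∀ m ∈ GammaIdx d S w, ∀ᶠ ρ : ℝ in nhdsWithin 0 (Set.Ioi 0),
      ∀ ε δ : ℝ, |ε| < ρ → δ < ρ → ∀ θ ∈ box d m δ, c < ‖SbarC d S w (zOf d ε θ)‖ := by
    intro m hm
    have hz : ∀ j, ContinuousAt (fun x : ℝ × (Fin (d + 1) → ℝ) => zOf d x.1 x.2 j)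
        (0, argOf d m) := by
      intro j
      unfold zOf
      split_ifs <;> fun_prop
    have hne : ∀ j, zOf d 0 (argOf d m) j ≠ 0 := fun j => by
      rw [zOf_zero_argOf, ← norm_ne_zero_iff, norm_wOf]
      exact one_ne_zero
    have hcont : ContinuousAt
        (fun x : ℝ × (Fin (d + 1) → ℝ) => ‖SbarC d S w (zOf d x.1 x.2)‖) (0, argOf d m) := by
      refine ContinuousAt.norm (tendsto_finsetSum _ fun i _ => ?_)
      exact (continuousAt_const.mul (tendsto_finsetProd _ fun j _ =>
        (hz _).zpow₀ _ (Or.inl (hne _)))).mul ((hz _).zpow₀ _ (Or.inl (hne _)))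
    have hev := hcont.eventually_const_lt
      (show c < ‖SbarC d S w (zOf d 0 (argOf d m))‖ by
        rwa [zOf_zero_argOf, norm_SbarC_wOf hm])
    obtain ⟨ρ₀, hρ₀, H⟩ := Metric.eventually_nhds_iff.1 hev
    filter_upwards [Ioo_mem_nhdsGT hρ₀] with ρ hρ ε δ hε hδ θ hθ
    refine H (y := (ε, θ)) ?_
    rw [Prod.dist_eq, max_lt_iff, dist_pi_lt_iff hρ₀]
    refine ⟨by simpa using hε.trans hρ.2, fun j => ?_⟩
    have := hθ j (Set.mem_univ j)
    rw [Real.dist_eq, abs_lt]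
    constructor <;> linarith [this.1, this.2, hρ.2]
  obtain ⟨ρ, hρ, hpos⟩ := ((Filter.eventually_all_finset _).2 key |>.and
    (self_mem_nhdsWithin (a := (0 : ℝ)) (s := Set.Ioi 0))).exists
  refine ⟨ρ, hpos, fun ε δ hε hδ θ hθ => ?_⟩
  obtain ⟨m, hm, hθm⟩ := Set.mem_iUnion₂.1 hθ
  exact hρ m hm ε δ hε hδ θ hθm

theorem box_mono (m : Fin (d + 1) → Fin 4) {δ δ' : ℝ} (h : δ ≤ δ') : box d m δ ⊆ box d m δ' :=
  Set.pi_mono fun _ _ => Set.Ioo_subset_Ioo (by linarith) (by linarith)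

theorem Nparam_mono {δ δ' : ℝ} (h : δ ≤ δ') : Nparam d S w δ ⊆ Nparam d S w δ' :=
  Set.iUnion₂_mono fun m _ => box_mono m h

theorem volume_Nparam_lt_top (δ : ℝ) : volume (Nparam d S w δ) < ⊤ := by
  refine measure_biUnion_lt_top (Finset.finite_toSet _) fun m _ => ?_
  rw [box, Real.volume_pi_Ioo]
  exact ENNReal.prod_lt_top fun _ _ => ENNReal.ofReal_lt_top

/-- An integrand bound on `N × C` gives a bound on the integral. -/
theorem norm_fullIntegral_le {n : ℕ} {ε δ r M : ℝ} (hδ : δ ≤ 1) (hM : 0 ≤ M)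
    (h : ∀ θ ∈ Nparam d S w δ, ∀ φ : ℝ,
      ‖GC d S w (zOf d ε θ) ((r : ℂ) * Complex.exp (Complex.I * φ)) /
            HC d S w (zOf d ε θ) ((r : ℂ) * Complex.exp (Complex.I * φ)) *
          (((∏ j, zOf d ε θ j) * ((r : ℂ) * Complex.exp (Complex.I * φ))) ^ n)⁻¹‖ ≤ M) :
    ‖fullIntegral d S w n ε δ r‖ ≤
      ((2 * π) ^ (d + 2))⁻¹ * (2 * π * volume.real (Nparam d S w 1)) * M := by
  have inner := fun θ hθ => norm_setIntegral_le_of_norm_le_const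
    (μ := volume) (s := Set.Ioo 0 (2 * π)) measure_Ioo_lt_top fun φ _ => h θ hθ φ
  have outer := norm_setIntegral_le_of_norm_le_const
    (volume_Nparam_lt_top (S := S) (w := w) δ) inner
  have hvol : volume.real (Nparam d S w δ) ≤ volume.real (Nparam d S w 1) :=
    measureReal_mono (Nparam_mono hδ) (volume_Nparam_lt_top 1).ne
  have hIoo : volume.real (Set.Ioo 0 (2 * π)) = 2 * π := by
    rw [Real.volume_real_Ioo_of_le (by positivity), sub_zero]
  rw [hIoo] at outer
  rw [fullIntegral, norm_smul, norm_inv, Real.norm_of_nonneg (by positivity), mul_assoc]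
  gcongr
  calc _ ≤ M * (2 * π) * volume.real (Nparam d S w δ) := outer
    _ ≤ M * (2 * π) * volume.real (Nparam d S w 1) := by gcongr
    _ = _ := by ring

theorem norm_GC_le (hw : ∀ i ∈ S, 0 < w i) {ε : ℝ} (hε₀ : 0 ≤ ε) (hε : ε ≤ 1)
    (θ : Fin (d + 1) → ℝ) (t : ℂ) :
    ‖GC d S w (zOf d ε θ) t‖ ≤ 2 ^ d * (1 + ‖t‖ *
      ((∑ i ∈ S.filter fun i => i (Fin.last d) = 0, w i) +
        2 * ∑ i ∈ S.filter fun i => i (Fin.last d) = -1, w i)) := by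
  have hA := norm_sum_filter_zOf_le hw ε θ fun i => i (Fin.last d) = -1
  have hQ := norm_sum_filter_zOf_le hw ε θ fun i => i (Fin.last d) = 0
  rw [GC, norm_mul, norm_prod]
  gcongr
  · calc ∏ j : Fin d, ‖1 + zOf d ε θ (Fin.castSucc j)‖ ≤ ∏ _j : Fin d, (2 : ℝ) := by
          refine Finset.prod_le_prod (fun _ _ => norm_nonneg _) fun j _ => ?_
          refine (norm_add_le _ _).trans ?_
          rw [norm_zOf_castSucc, norm_one]
          norm_num
      _ = 2 ^ d := by simp
  · refine (norm_sub_le _ _).trans ?_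
    rw [norm_one, norm_mul, norm_mul, norm_prod_zOf hε]
    have h : ‖QC d S w (zOf d ε θ) + 2 * zOf d ε θ (Fin.last d) * AC d S w (zOf d ε θ)‖ ≤
        ‖QC d S w (zOf d ε θ)‖ + 2 * 1 * ‖AC d S w (zOf d ε θ)‖ := by
      refine (norm_add_le _ _).trans ?_
      rw [norm_mul, norm_mul, norm_zOf_last hε, Complex.norm_two]
      gcongr
      linarith
    rw [mul_one] at h
    gcongr
    · exact mul_le_of_le_one_right (norm_nonneg _) (by linarith)
    · refine h.trans ?_
      gcongr
      · exact hQ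
      · exact hA

theorem le_norm_HC (hw : ∀ i ∈ S, 0 < w i) {ε b c : ℝ} (hε₀ : 0 ≤ ε) (hε : ε ≤ 1)
    (θ : Fin (d + 1) → ℝ) (t : ℂ) (hb₀ : 0 ≤ b) (hc₀ : 0 ≤ c)
    (hb : 1 + b ≤ ‖t‖ * (1 - ε) * ‖SbarC d S w (zOf d ε θ)‖)
    (hc : ‖t‖ * ((∑ i ∈ S.filter fun i => i (Fin.last d) = 0, w i) +
        ∑ i ∈ S.filter fun i => i (Fin.last d) = -1, w i) ≤ 1 - c) :
    ε * b * c ≤ ‖HC d S w (zOf d ε θ) t‖ := by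
  have hA := norm_sum_filter_zOf_le hw ε θ fun i => i (Fin.last d) = -1
  have hQ := norm_sum_filter_zOf_le hw ε θ fun i => i (Fin.last d) = 0
  rw [HC, norm_mul, norm_mul]
  gcongr
  · have := norm_sub_norm_le (1 : ℂ) (zOf d ε θ (Fin.last d))
    rw [norm_one, norm_zOf_last hε] at this
    linarith
  · have := norm_sub_norm_le (t * (∏ j, zOf d ε θ j) * SbarC d S w (zOf d ε θ)) 1
    rw [norm_sub_rev, norm_one, norm_mul, norm_mul, norm_prod_zOf hε] at this
    linarith
  · have h₁ := norm_sub_norm_le (1 : ℂ) (t * (∏ j, zOf d ε θ j) *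
      (QC d S w (zOf d ε θ) + zOf d ε θ (Fin.last d) * AC d S w (zOf d ε θ)))
    have h₂ : ‖t * (∏ j, zOf d ε θ j) *
        (QC d S w (zOf d ε θ) + zOf d ε θ (Fin.last d) * AC d S w (zOf d ε θ))‖ ≤ 1 - c := by
      refine le_trans ?_ hc
      calc _ ≤ ‖t‖ * 1 * (‖QC d S w (zOf d ε θ)‖ + 1 * ‖AC d S w (zOf d ε θ)‖) := by
            rw [norm_mul, norm_mul, norm_prod_zOf hε]
            gcongr
            · linarith
            · refine (norm_add_le _ _).trans ?_
              rw [norm_mul, norm_zOf_last hε]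
              gcongr
              linarith
        _ ≤ _ := by
            rw [mul_one, one_mul]
            gcongr
            · exact hQ
            · exact hA
    rw [norm_one] at h₁
    linarith

end ZeroDrift

/-- A bound by a geometric sequence that holds eventually holds everywhere after enlarging the
constant. -/
theorem exists_forall_le_mul_pow_of_eventually {f : ℕ → ℝ} {C τ : ℝ} (hτ : 0 < τ)
    (h : ∀ᶠ n in atTop, f n ≤ C * τ ^ n) : ∃ C', ∀ n, f n ≤ C' * τ ^ n := by
  have hbdd : BddAbove (Set.range fun n => f n / τ ^ n) := by
    refine Filter.IsBoundedUnder.bddAbove_range ⟨C, ?_⟩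
    rw [Filter.eventually_map]
    filter_upwards [h] with n hn
    exact (div_le_iff₀ (by positivity)).2 hn
  obtain ⟨C', hC'⟩ := hbdd
  exact ⟨C', fun n => (div_le_iff₀ (by positivity)).1 (hC' ⟨n, rfl⟩)⟩

/-- Lemma (outer contour): for sufficiently small `γ > 0`, the integral over the
outer circle `C^out = {|t| = (1+γ)/S(1)}` is exponentially smaller than `S(1)^n`. -/
theorem outer_contour
    (d : ℕ) (S : Finset (Fin (d + 1) → ℤ)) (w : (Fin (d + 1) → ℤ) → ℝ)
    (hstep : ∀ i ∈ S, (∀ j, i j = -1 ∨ i j = 0 ∨ i j = 1) ∧ i ≠ 0)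
    (hw : ∀ i ∈ S, 0 < w i)
    (hsym : ∀ k : Fin d, SymmetricAxis (d + 1) S w (Fin.castSucc k))
    (hfwd : ∀ k : Fin (d + 1), ∃ i ∈ S, i k = 1)
    (hbwd : ∀ k : Fin (d + 1), ∃ i ∈ S, i k = -1)
    (hzero : (∑ i ∈ S.filter fun i => i (Fin.last d) = -1, w i)
        = ∑ i ∈ S.filter fun i => i (Fin.last d) = 1, w i)
    (α β : ℝ) (hα : 1 / 2 < α) (hαβ : α < 2 * β) (hsum : 1 < α + β)
    (hβ1 : 1 / 3 < β) (hβ2 : β < 1 / 2) :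
    ∃ γ₀ : ℝ, 0 < γ₀ ∧ ∀ γ : ℝ, 0 < γ → γ < γ₀ →
      ∃ τ C : ℝ, 0 < τ ∧ τ < ZeroDrift.S1 d S w ∧
        ∀ n : ℕ,
          ‖ZeroDrift.fullIntegral d S w n ((n : ℝ) ^ (-α)) ((n : ℝ) ^ (-β))
              ((1 + γ) / ZeroDrift.S1 d S w)‖
            ≤ C * τ ^ n := by
  obtain ⟨i₀, hi₀, hi₀1⟩ := hfwd (Fin.last d)
  set A₁ := ∑ i ∈ S.filter fun i => i (Fin.last d) = -1, w i with hA₁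
  set Q₁ := ∑ i ∈ S.filter fun i => i (Fin.last d) = 0, w i with hQ₁
  set B₁ := ∑ i ∈ S.filter fun i => i (Fin.last d) = 1, w i with hB₁
  set s := ZeroDrift.S1 d S w with hs
  have hsplit : s = A₁ + Q₁ + B₁ := ZeroDrift.S1_eq_sum_filter hstep
  have hBpos : 0 < B₁ := Finset.sum_pos (fun i hi => hw i (Finset.mem_filter.1 hi).1)
    ⟨i₀, Finset.mem_filter.2 ⟨hi₀, hi₀1⟩⟩
  have hQnn : 0 ≤ Q₁ := Finset.sum_nonneg fun i hi => (hw i (Finset.mem_filter.1 hi).1).le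
  have hspos : 0 < s := by linarith
  refine ⟨B₁ / s, by positivity, fun γ hγ hγB => ?_⟩
  have hα0 : 0 < α := by linarith
  have hβ0 : 0 < β := by linarith
  have hα1 : α < 1 := by linarith
  set r := (1 + γ) / s with hr
  have hrpos : 0 < r := by positivity
  have hrs : r * s = 1 + γ := div_mul_cancel₀ _ hspos.ne'
  set c := 1 - r * (Q₁ + A₁) with hc
  have hcpos : 0 < c := by
    have h₁ : γ * s < B₁ := (lt_div_iff₀ hspos).1 hγB
    have h₂ : (1 + γ) * (Q₁ + A₁) < s := by nlinarith
    have h₃ : r * (Q₁ + A₁) < 1 := by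
      rw [hr, div_mul_eq_mul_div, div_lt_one hspos]
      exact h₂
    linarith
  -- neighbourhoods on which `S̄` and `1 - ε` lose at most a fixed factor
  obtain ⟨ρ, hρ, hS⟩ := ZeroDrift.eventually_lt_norm_SbarC (d := d) (S := S) (w := w)
    (c := s * ((1 + γ / 4) / (1 + γ / 2)))
    (mul_lt_of_lt_one_right hspos ((div_lt_one (by positivity)).2 (by linarith)))
  set τ := s / (1 + γ / 4) with hτ
  have hτpos : 0 < τ := by positivity
  set q := (1 + γ / 4) / (1 + γ / 2) with hq
  have hqpos : 0 < q := by positivity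
  have hq1 : q < 1 := (div_lt_one (by positivity)).2 (by linarith)
  set K := 2 ^ d * (1 + r * (Q₁ + 2 * A₁)) / (γ / 4 * c) with hK
  have hKnn : 0 ≤ K := by
    have : 0 ≤ A₁ := by linarith
    positivity
  set V := ((2 * π) ^ (d + 2))⁻¹ * (2 * π * volume.real (ZeroDrift.Nparam d S w 1)) with hV
  have hVnn : 0 ≤ V := by positivity
  refine (exists_forall_le_mul_pow_of_eventually (C := V * K) hτpos ?_).elim fun C hC =>
    ⟨τ, C, hτpos, div_lt_self hspos (by linarith), hC⟩
  have hεlim : Tendsto (fun n : ℕ => (n : ℝ) ^ (-α)) atTop (nhds 0) :=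
    (tendsto_rpow_neg_atTop hα0).comp tendsto_natCast_atTop_atTop
  have hδlim : Tendsto (fun n : ℕ => (n : ℝ) ^ (-β)) atTop (nhds 0) :=
    (tendsto_rpow_neg_atTop hβ0).comp tendsto_natCast_atTop_atTop
  have hgeom := tendsto_self_mul_const_pow_of_lt_one hqpos.le hq1
  have hγ' : 0 < 1 - (1 + γ / 2) / (1 + γ) :=
    sub_pos.2 ((div_lt_one (by positivity)).2 (by linarith))
  filter_upwards [hεlim.eventually_lt_const hρ, hεlim.eventually_lt_const one_pos,
    hεlim.eventually_lt_const hγ', hδlim.eventually_lt_const hρ,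
    hδlim.eventually_lt_const one_pos, hgeom.eventually_lt_const one_pos,
    eventually_ge_atTop 1] with n hερ hε1 hεγ hδρ hδ1 hqn hn
  have hn' : (1 : ℝ) ≤ n := by exact_mod_cast hn
  set ε := (n : ℝ) ^ (-α) with hε
  have hεpos : 0 < ε := by positivity
  have hεn : ε⁻¹ ≤ n := by
    rw [hε, Real.rpow_neg (by positivity), inv_inv]
    simpa using Real.rpow_le_rpow_of_exponent_le hn' hα1.le
  have hrε : 1 + γ / 2 ≤ r * (1 - ε) * s := by
    have := (div_lt_iff₀ (by positivity : 0 < 1 + γ)).1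
      (by linarith : (1 + γ / 2) / (1 + γ) < 1 - ε)
    calc 1 + γ / 2 ≤ (1 - ε) * (1 + γ) := this.le
      _ = _ := by rw [← hrs]; ring
  have hτq : (r * (1 - ε))⁻¹ ≤ q * τ := by
    have : q * τ = s / (1 + γ / 2) := by
      rw [hq, hτ]
      field_simp
    rw [this, le_div_iff₀ (by positivity), inv_mul_le_iff₀ (mul_pos hrpos (by linarith))]
    exact hrε
  refine (ZeroDrift.norm_fullIntegral_le (M := K * τ ^ n) hδ1.le (by positivity) ?_).trans_eq
    (by rw [hV]; ring)
  intro θ hθ φ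
  set t := (r : ℂ) * Complex.exp (Complex.I * φ) with ht
  have htr : ‖t‖ = r := by
    rw [ht, norm_mul, mul_comm Complex.I, Complex.norm_exp_ofReal_mul_I, mul_one,
      Complex.norm_real, Real.norm_of_nonneg hrpos.le]
  have hG := ZeroDrift.norm_GC_le hw hεpos.le hε1.le θ t
  have hH := ZeroDrift.le_norm_HC hw hεpos.le hε1.le θ t (b := γ / 4) (c := c) (by positivity)
    hcpos.le
    (by
      have h := (hS ε _ (by rwa [abs_of_pos hεpos]) hδρ θ hθ).le
      rw [htr]
      have h1ε : 0 ≤ 1 - ε := by linarith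
      calc 1 + γ / 4 = (1 + γ / 2) * q := by rw [hq]; field_simp
        _ ≤ r * (1 - ε) * s * q := by gcongr
        _ = r * (1 - ε) * (s * q) := by ring
        _ ≤ _ := by gcongr)
    (by rw [htr, hc]; linarith)
  rw [htr] at hG
  rw [norm_mul, norm_div, norm_inv, norm_pow, norm_mul, ZeroDrift.norm_prod_zOf hε1.le, htr,
    mul_comm (1 - ε), ← inv_pow]
  have h1ε : 0 < 1 - ε := by linarith
  have hGnn := (norm_nonneg _).trans hG
  calc _ ≤ 2 ^ d * (1 + r * (Q₁ + 2 * A₁)) / (ε * (γ / 4) * c) * (q * τ) ^ n := by gcongr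
    _ = K * ε⁻¹ * q ^ n * τ ^ n := by rw [hK, mul_pow]; field_simp
    _ ≤ K * (n * q ^ n) * τ ^ n := by rw [← mul_assoc]; gcongr
    _ ≤ K * 1 * τ ^ n := by gcongr
    _ = K * τ ^ n := by ring

end
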